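/- If the equivalence problem for finite Nmatrices is decidable — that is, if there is an algorithm which, given (an encoding of) a finite signature Σ and finite Σ-Nmatrices M_1 and M_2, decides whether ⊢_{M_1} = ⊢_{M_2} — then the theorem existence problem for finite Nmatrices (deciding whether Thm(Σ, ⊢_M) ≠ ∅ for a given finite Σ-Nmatrix M) is decidable. Consequently, since the theorem existence problem for finite Nmatrices is undecidable, the equivalence problem for finite Nmatrices is undecidable. -/

import Mathlib

structure Signature where
  Conn : Type
  arity : Conn → ℕ

inductive Fm (S : Signature) : Type where
  | var : ℕ → Fm S
  | app : (c : S.Conn) → (Fin (S.arity c) → Fm S) → Fm S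

def Fm.subst {S : Signature} (σ : ℕ → Fm S) : Fm S → Fm S
  | .var i => σ i
  | .app c args => .app c (fun j => (args j).subst σ)

def Fm.varsLT {S : Signature} (n : ℕ) : Fm S → Prop
  | .var i => i < n
  | .app _ args => ∀ j, (args j).varsLT n

structure NMatrix (S : Signature) (V : Type) where
  D : Set V
  interp : (c : S.Conn) → (Fin (S.arity c) → V) → Set V
  interp_nonempty : ∀ c args, (interp c args).Nonempty

def IsVal {S : Signature} {V : Type} (M : NMatrix S V) (v : Fm S → V) : Prop :=
  ∀ (c : S.Conn) (args : Fin (S.arity c) → Fm S),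
    v (Fm.app c args) ∈ M.interp c (fun i => v (args i))

def Entails {S : Signature} {V : Type} (M : NMatrix S V) (Γ : Set (Fm S)) (A : Fm S) : Prop :=
  ∀ v, IsVal M v → (∀ B ∈ Γ, v B ∈ M.D) → v A ∈ M.D

def Interderiv {S : Signature} {V : Type} (M : NMatrix S V) (A B : Fm S) : Prop :=
  Entails M {A} B ∧ Entails M {B} A

def Deterministic {S : Signature} {V : Type} (M : NMatrix S V) : Prop :=
  ∀ c args, ∃ x, M.interp c args = {x}

/-- The signature encoded by a list of arities. -/
abbrev codeSig (ar : List ℕ) : Signature := ⟨Fin ar.length, fun j => ar.get j⟩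

-- The finite Σ-Nmatrix encoded by the data `(ar, m, tbl, ds)`: its truth-values are
-- `Fin (m+1)`, its designated values are those listed in `ds`, and the interpretation of
-- connective `j` on an argument tuple is read off from the table `tbl` (defaulting to `{0}`
-- on malformed entries, so that decoding is total).
open Classical in
noncomputable def decodeNMat (ar : List ℕ) (m : ℕ) (tbl : List (List (List ℕ)))
    (ds : List ℕ) : NMatrix (codeSig ar) (Fin (m + 1)) where
  D := { x : Fin (m + 1) | (x : ℕ) ∈ ds }
  interp := fun j args =>
    let row := (tbl.getD (j : ℕ) []).getD (∑ i, ((args i) : ℕ) * (m + 1) ^ (i : ℕ)) []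
    if ∃ x : Fin (m + 1), (x : ℕ) ∈ row then { x : Fin (m + 1) | (x : ℕ) ∈ row } else {0}
  interp_nonempty := by
    intro j args
    dsimp only
    split
    · next h => exact h
    · exact ⟨0, rfl⟩

/-- Codes of finite Nmatrices (the signature part, a list of arities, comes first). -/
abbrev NMatCode : Type := List ℕ × ℕ × List (List (List ℕ)) × List ℕ

/-- The theorem existence problem for finite Nmatrices, as a predicate on codes. -/
noncomputable def thmExistsProblem (c : NMatCode) : Prop :=
  ∃ A : Fm (codeSig c.1), Entails (decodeNMat c.1 c.2.1 c.2.2.1 c.2.2.2) ∅ A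

/-- Codes of pairs of finite Nmatrices over a common finite signature (given by the shared
list of arities). -/
abbrev EqvCode : Type :=
  List ℕ × (ℕ × List (List (List ℕ)) × List ℕ) × (ℕ × List (List (List ℕ)) × List ℕ)

/-- The equivalence problem for finite Nmatrices: do the two encoded Σ-Nmatrices induce the
same consequence relation? -/
noncomputable def eqvProblem (c : EqvCode) : Prop :=
  ∀ (Γ : Set (Fm (codeSig c.1))) (A : Fm (codeSig c.1)),
    Entails (decodeNMat c.1 c.2.1.1 c.2.1.2.1 c.2.1.2.2) Γ A ↔
    Entails (decodeNMat c.1 c.2.2.1 c.2.2.2.1 c.2.2.2.2) Γ A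


/-- Binary trees, the data manipulated by the Horn clauses below. -/
inductive Tree2 : Type where
  | nil : Tree2
  | pair : Tree2 → Tree2 → Tree2

namespace Tree2

def IsPair : Tree2 → Prop
  | nil => False
  | pair _ _ => True

def hd : Tree2 → Tree2
  | nil => nil
  | pair s _ => s

def tl : Tree2 → Tree2
  | nil => nil
  | pair _ t => t

/-- Numerals: the successor of `t` is `pair t t`. -/
def num : ℕ → Tree2
  | 0 => nil
  | n + 1 => pair (num n) (num n)

def ofList : List ℕ → Tree2
  | [] => nil
  | a :: l => pair (num a) (ofList l)

@[simp]
theorem hd_pair (s t : Tree2) : (pair s t).hd = s := rfl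

@[simp]
theorem tl_pair (s t : Tree2) : (pair s t).tl = t := rfl

theorem hd_ofList (l : List ℕ) : (ofList l).hd = num l.headI := by
  cases l <;> rfl

theorem tl_ofList (l : List ℕ) : (ofList l).tl = ofList l.tail := by
  cases l <;> rfl

theorem isPair_num (n : ℕ) : (num n).IsPair ↔ n ≠ 0 := by
  cases n <;> simp [num, IsPair]

theorem eq_nil {t : Tree2} (h : ¬ t.IsPair) : t = nil := by
  cases t
  · rfl
  · exact absurd trivial h

theorem eq_pair {t : Tree2} (h : t.IsPair) : t = pair t.hd t.tl := by
  cases t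
  · exact absurd h id
  · rfl

theorem eq_num_succ {t : Tree2} {n : ℕ} (h : t.IsPair) (h₁ : t.hd = num n) (h₂ : t.tl = num n) :
    t = num (n + 1) := by
  rw [eq_pair h, h₁, h₂]; rfl

end Tree2

/-- The side conditions of a Horn clause in six variables. -/
inductive Check : Type where
  | isNil (i : Fin 6)
  | isPair (i : Fin 6)
  | hd (i j : Fin 6)
  | tl (i j : Fin 6)

def Check.Holds (x : Fin 6 → Tree2) : Check → Prop
  | isNil i => ¬ (x i).IsPair
  | isPair i => (x i).IsPair
  | hd i j => (x i).hd = x j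
  | tl i j => (x i).tl = x j

/-- A Horn clause in six variables over binary predicates from `Q`, with conclusion
`concl(x 0, x 1)` and at most two premises. -/
structure HornRule (Q : Type) where
  concl : Q
  checks : List Check
  prem : Fin 2 → Option (Q × Fin 6 × Fin 6)

inductive Derives {Q : Type} (R : List (HornRule Q)) : Q → Tree2 → Tree2 → Prop where
  | intro (r : HornRule Q) (hr : r ∈ R) (x : Fin 6 → Tree2) (hc : ∀ c ∈ r.checks, c.Holds x)
      (hp : ∀ k q i j, r.prem k = some (q, i, j) → Derives R q (x i) (x j)) :
      Derives R r.concl (x 0) (x 1)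

section Simulation

open Turing.ToPartrec Tree2

theorem mem_eval_cons {f fs : Code} {v w : List ℕ} :
    w ∈ (Code.cons f fs).eval v ↔
      ∃ n ∈ f.eval v, ∃ ns ∈ fs.eval v, w = n.headI :: ns := by
  simp [Part.bind_eq_bind, Part.pure_eq_some]

theorem mem_eval_comp {f g : Code} {v w : List ℕ} :
    w ∈ (Code.comp f g).eval v ↔ ∃ u ∈ g.eval v, w ∈ f.eval u := by
  rw [Code.comp_eval]
  exact Part.mem_bind_iff

theorem mem_eval_fix {f : Code} {v w : List ℕ} :
    w ∈ (Code.fix f).eval v ↔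
      ∃ u ∈ f.eval v, (u.headI = 0 ∧ w = u.tail) ∨
        (u.headI ≠ 0 ∧ w ∈ (Code.fix f).eval u.tail) := by
  rw [Code.fix_eval]
  refine PFun.mem_fix_iff.trans ?_
  simp only [Part.mem_map_iff]
  constructor
  · rintro (⟨u, hu, h⟩ | ⟨a, ⟨u, hu, h⟩, hw⟩)
    · refine ⟨u, hu, Or.inl ?_⟩
      split_ifs at h with h0
      exact ⟨h0, (Sum.inl.inj h).symm⟩
    · refine ⟨u, hu, Or.inr ?_⟩
      split_ifs at h with h0
      obtain rfl := Sum.inr.inj h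
      exact ⟨h0, hw⟩
  · rintro ⟨u, hu, ⟨h0, rfl⟩ | ⟨h0, hw⟩⟩
    · exact Or.inl ⟨u, hu, if_pos h0⟩
    · exact Or.inr ⟨_, ⟨u, hu, if_neg h0⟩, hw⟩

theorem mem_eval_case {f g : Code} {v w : List ℕ} :
    w ∈ (Code.case f g).eval v ↔
      (v.headI = 0 ∧ w ∈ f.eval v.tail) ∨
        ∃ y, v.headI = y + 1 ∧ w ∈ g.eval (y :: v.tail) := by
  rw [Code.case_eval]
  beta_reduce
  generalize v.headI = k
  cases k <;> simp

/-- The Horn clauses describing the big-step evaluation of one code, where `ι c` is the predicate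
stating that `c` evaluates the first argument to the second. -/
def codeRules {Q : Type} (ι : Code → Q) : Code → List (HornRule Q)
  | .zero' => [⟨ι .zero', [.isNil 2, .isPair 1, .hd 1 2, .tl 1 0], ![none, none]⟩]
  | .succ => [⟨ι .succ, [.hd 0 2, .isPair 3, .hd 3 2, .tl 3 2, .isNil 4, .isPair 1, .hd 1 3,
      .tl 1 4], ![none, none]⟩]
  | .tail => [⟨ι .tail, [.tl 0 1], ![none, none]⟩]
  | .cons f fs => [⟨ι (.cons f fs), [.hd 2 4, .isPair 1, .hd 1 4, .tl 1 3],
      ![some (ι f, 0, 2), some (ι fs, 0, 3)]⟩]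
  | .comp f g => [⟨ι (.comp f g), [], ![some (ι g, 0, 2), some (ι f, 2, 1)]⟩]
  | .case f g => [⟨ι (.case f g), [.hd 0 2, .isNil 2, .tl 0 3], ![some (ι f, 3, 1), none]⟩,
      ⟨ι (.case f g), [.hd 0 2, .isPair 2, .hd 2 3, .tl 0 4, .isPair 5, .hd 5 3, .tl 5 4],
        ![some (ι g, 5, 1), none]⟩]
  | .fix f => [⟨ι (.fix f), [.hd 2 3, .isNil 3, .tl 2 1], ![some (ι f, 0, 2), none]⟩,
      ⟨ι (.fix f), [.hd 2 3, .isPair 3, .tl 2 4], ![some (ι f, 0, 2), some (ι (.fix f), 4, 1)]⟩]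

theorem codeRules_concl {Q : Type} {ι : Code → Q} {c : Code} {r : HornRule Q}
    (h : r ∈ codeRules ι c) : r.concl = ι c := by
  cases c <;> simp only [codeRules, List.mem_cons, List.not_mem_nil, or_false] at h
  case case | fix => rcases h with h | h <;> rw [h]
  all_goals rw [h]

def subcodes : Code → List Code
  | .zero' => [.zero']
  | .succ => [.succ]
  | .tail => [.tail]
  | .cons f g => .cons f g :: (subcodes f ++ subcodes g)
  | .comp f g => .comp f g :: (subcodes f ++ subcodes g)
  | .case f g => .case f g :: (subcodes f ++ subcodes g)
  | .fix f => .fix f :: subcodes f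

theorem self_mem_subcodes (c : Code) : c ∈ subcodes c := by
  cases c <;> simp [subcodes]

theorem subcodes_subset {c d : Code} (h : d ∈ subcodes c) : subcodes d ⊆ subcodes c := by
  induction c with
  | zero' | succ | tail =>
    simp only [subcodes, List.mem_singleton] at h; subst h; exact List.Subset.refl _
  | cons f g hf hg | comp f g hf hg | case f g hf hg =>
    rcases List.mem_cons.1 h with rfl | h
    · exact List.Subset.refl _
    · intro x hx
      rcases List.mem_append.1 h with h | h
      · simp [subcodes, hf h hx]
      · simp [subcodes, hg h hx]
  | fix f hf =>
    rcases List.mem_cons.1 h with rfl | h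
    · exact List.Subset.refl _
    · intro x hx
      simp [subcodes, hf h hx]

variable {Q : Type} {ι : Code → Q} {R : List (HornRule Q)}

theorem derives_of_mem_eval {c : Code}
    (hR : ∀ d ∈ subcodes c, ∀ r ∈ codeRules ι d, r ∈ R) {v w : List ℕ} (h : w ∈ c.eval v) :
    Derives R (ι c) (ofList v) (ofList w) := by
  induction c generalizing v w with
  | zero' =>
    simp only [Code.zero'_eval, Part.pure_eq_some, Part.mem_some_iff] at h
    subst h
    refine Derives.intro _ (hR _ (self_mem_subcodes _) _ (by simp [codeRules]; rfl))
      ![ofList v, ofList (0 :: v), nil, nil, nil, nil] ?_ ?_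
    · simp [Check.Holds, IsPair, ofList, num]
    · simp [Fin.forall_fin_two]
  | succ =>
    simp only [Code.succ_eval, Part.pure_eq_some, Part.mem_some_iff] at h
    subst h
    refine Derives.intro _ (hR _ (self_mem_subcodes _) _ (by simp [codeRules]; rfl))
      ![ofList v, ofList [v.headI.succ], num v.headI, num (v.headI + 1), nil, nil] ?_ ?_
    · simp [Check.Holds, IsPair, ofList, num, hd_ofList]
    · simp [Fin.forall_fin_two]
  | tail =>
    simp only [Code.tail_eval, Part.pure_eq_some, Part.mem_some_iff] at h
    subst h
    refine Derives.intro _ (hR _ (self_mem_subcodes _) _ (by simp [codeRules]; rfl))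
      ![ofList v, ofList v.tail, nil, nil, nil, nil] ?_ ?_
    · simp [Check.Holds, tl_ofList]
    · simp [Fin.forall_fin_two]
  | cons f g hf hg =>
    obtain ⟨n, hn, ns, hns, rfl⟩ := mem_eval_cons.1 h
    have h₁ := hf (fun d hd => hR d (by simp [subcodes, hd])) hn
    have h₂ := hg (fun d hd => hR d (by simp [subcodes, hd])) hns
    refine Derives.intro _ (hR _ (self_mem_subcodes _) _ (by simp [codeRules]; rfl))
      ![ofList v, ofList (n.headI :: ns), ofList n, ofList ns, num n.headI, nil] ?_ ?_
    · simp [Check.Holds, IsPair, ofList, hd_ofList]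
    · rw [Fin.forall_fin_two]
      constructor <;> rintro q i j ⟨⟩
      · exact h₁
      · exact h₂
  | comp f g hf hg =>
    obtain ⟨u, hu, hw⟩ := mem_eval_comp.1 h
    have h₁ := hf (fun d hd => hR d (by simp [subcodes, hd])) hw
    have h₂ := hg (fun d hd => hR d (by simp [subcodes, hd])) hu
    refine Derives.intro _ (hR _ (self_mem_subcodes _) _ (by simp [codeRules]; rfl))
      ![ofList v, ofList w, ofList u, nil, nil, nil] ?_ ?_
    · simp
    · rw [Fin.forall_fin_two]
      constructor <;> rintro q i j ⟨⟩
      · exact h₂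
      · exact h₁
  | case f g hf hg =>
    rcases mem_eval_case.1 h with ⟨h0, hw⟩ | ⟨y, hy, hw⟩
    · have h₁ := hf (fun d hd => hR d (by simp [subcodes, hd])) hw
      refine Derives.intro _ (hR _ (self_mem_subcodes _) _ (by simp [codeRules]; exact Or.inl rfl))
        ![ofList v, ofList w, nil, ofList v.tail, nil, nil] ?_ ?_
      · simp [Check.Holds, IsPair, hd_ofList, tl_ofList, h0, num]
      · rw [Fin.forall_fin_two]
        constructor <;> rintro q i j ⟨⟩
        exact h₁
    · have h₁ := hg (fun d hd => hR d (by simp [subcodes, hd])) hw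
      refine Derives.intro _ (hR _ (self_mem_subcodes _) _ (by simp [codeRules]; exact Or.inr rfl))
        ![ofList v, ofList w, num (y + 1), num y, ofList v.tail, ofList (y :: v.tail)] ?_ ?_
      · simp [Check.Holds, IsPair, hd_ofList, tl_ofList, hy, num, ofList]
      · rw [Fin.forall_fin_two]
        constructor <;> rintro q i j ⟨⟩
        exact h₁
  | fix f hf =>
    have hf' := fun {v w : List ℕ} => @hf (fun d hd => hR d (by simp [subcodes, hd])) v w
    have key := h
    rw [Code.fix_eval] at key
    refine PFun.fixInduction (C := fun v => Derives R (ι f.fix) (ofList v) (ofList w)) key ?_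
    intro v hv ih
    rw [← Code.fix_eval] at hv
    obtain ⟨u, hu, hw⟩ := mem_eval_fix.1 hv
    have h₁ := hf' hu
    rcases hw with ⟨h0, rfl⟩ | ⟨h0, hw⟩
    · refine Derives.intro _ (hR _ (self_mem_subcodes _) _ (by simp [codeRules]; exact Or.inl rfl))
        ![ofList v, ofList u.tail, ofList u, nil, nil, nil] ?_ ?_
      · simp [Check.Holds, IsPair, hd_ofList, tl_ofList, h0, num]
      · rw [Fin.forall_fin_two]
        constructor <;> rintro q i j ⟨⟩
        exact h₁
    · have h₂ := ih u.tail (by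
        rw [Part.mem_map_iff]; exact ⟨u, hu, if_neg h0⟩)
      refine Derives.intro _ (hR _ (self_mem_subcodes _) _ (by simp [codeRules]; exact Or.inr rfl))
        ![ofList v, ofList w, ofList u, num u.headI, ofList u.tail, nil] ?_ ?_
      · simp [Check.Holds, isPair_num, hd_ofList, tl_ofList, h0]
      · rw [Fin.forall_fin_two]
        constructor <;> rintro q i j ⟨⟩
        · exact h₁
        · exact h₂

theorem mem_eval_of_derives {S : List Code} (hS : ∀ c ∈ S, subcodes c ⊆ S)
    (hR : ∀ c ∈ S, ∀ r ∈ R, r.concl = ι c → r ∈ codeRules ι c)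
    {q : Q} {s t : Tree2} (h : Derives R q s t) {c : Code} (hc : c ∈ S) (hq : q = ι c)
    {v : List ℕ} (hs : s = ofList v) : ∃ w ∈ c.eval v, t = ofList w := by
  induction h generalizing c v with
  | intro r hr x hx hp ih =>
    have hr' := hR c hc r hr hq
    have hsub := hS c hc
    clear hR hr
    cases c with
    | zero' =>
      simp only [codeRules, List.mem_singleton] at hr'
      subst hr'
      simp only [List.forall_mem_cons, Check.Holds] at hx
      obtain ⟨h1, h2, h3, h4, -⟩ := hx
      refine ⟨0 :: v, by simp [Part.pure_eq_some], ?_⟩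
      rw [eq_pair h2, h3, h4, eq_nil h1, hs]; rfl
    | succ =>
      simp only [codeRules, List.mem_singleton] at hr'
      subst hr'
      simp only [List.forall_mem_cons, Check.Holds] at hx
      obtain ⟨h1, h2, h3, h4, h5, h6, h7, h8, -⟩ := hx
      refine ⟨[v.headI.succ], by simp [Part.pure_eq_some], ?_⟩
      rw [hs, hd_ofList] at h1
      rw [eq_pair h6, h7, h8, eq_nil h5, eq_num_succ h2 (h3.trans h1.symm) (h4.trans h1.symm)]
      rfl
    | tail =>
      simp only [codeRules, List.mem_singleton] at hr'
      subst hr'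
      simp only [List.forall_mem_cons, Check.Holds] at hx
      refine ⟨v.tail, by simp [Part.pure_eq_some], ?_⟩
      rw [← hx.1, hs, tl_ofList]
    | cons f g =>
      simp only [codeRules, List.mem_singleton] at hr'
      subst hr'
      simp only [List.forall_mem_cons, Check.Holds] at hx
      obtain ⟨h1, h2, h3, h4, -⟩ := hx
      obtain ⟨n, hn, en⟩ := ih 0 _ _ _ rfl
        (hsub (by simp [subcodes, self_mem_subcodes])) rfl hs
      obtain ⟨ns, hns, ens⟩ := ih 1 _ _ _ rfl
        (hsub (by simp [subcodes, self_mem_subcodes])) rfl hs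
      refine ⟨n.headI :: ns, mem_eval_cons.2 ⟨n, hn, ns, hns, rfl⟩, ?_⟩
      rw [eq_pair h2, h3, h4, ← h1, ens, en, hd_ofList]; rfl
    | comp f g =>
      simp only [codeRules, List.mem_singleton] at hr'
      subst hr'
      obtain ⟨u, hu, eu⟩ := ih 0 _ _ _ rfl
        (hsub (by simp [subcodes, self_mem_subcodes])) rfl hs
      obtain ⟨w, hw, ew⟩ := ih 1 _ _ _ rfl
        (hsub (by simp [subcodes, self_mem_subcodes])) rfl eu
      exact ⟨w, mem_eval_comp.2 ⟨u, hu, hw⟩, ew⟩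
    | case f g =>
      simp only [codeRules, List.mem_cons, List.not_mem_nil, or_false] at hr'
      rcases hr' with rfl | rfl
      · simp only [List.forall_mem_cons, Check.Holds] at hx
        obtain ⟨h1, h2, h3, -⟩ := hx
        rw [hs, tl_ofList] at h3
        rw [hs, hd_ofList] at h1
        rw [← h1, isPair_num, not_not] at h2
        obtain ⟨w, hw, ew⟩ := ih 0 _ _ _ rfl
          (hsub (by simp [subcodes, self_mem_subcodes])) rfl h3.symm
        exact ⟨w, mem_eval_case.2 (Or.inl ⟨h2, hw⟩), ew⟩
      · simp only [List.forall_mem_cons, Check.Holds] at hx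
        obtain ⟨h1, h2, h3, h4, h5, h6, h7, -⟩ := hx
        rw [hs, tl_ofList] at h4
        rw [hs, hd_ofList] at h1
        rw [← h1, isPair_num] at h2
        obtain ⟨y, hy⟩ := Nat.exists_eq_succ_of_ne_zero h2
        rw [← h1, hy] at h3
        have h8 : x 5 = ofList (y :: v.tail) := by
          rw [eq_pair h5, h6, h7, ← h3, ← h4]; rfl
        obtain ⟨w, hw, ew⟩ := ih 0 _ _ _ rfl
          (hsub (by simp [subcodes, self_mem_subcodes])) rfl h8
        exact ⟨w, mem_eval_case.2 (Or.inr ⟨y, hy, hw⟩), ew⟩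
    | fix f =>
      simp only [codeRules, List.mem_cons, List.not_mem_nil, or_false] at hr'
      rcases hr' with rfl | rfl
      · simp only [List.forall_mem_cons, Check.Holds] at hx
        obtain ⟨h1, h2, h3, -⟩ := hx
        obtain ⟨u, hu, eu⟩ := ih 0 _ _ _ rfl
          (hsub (by simp [subcodes, self_mem_subcodes])) rfl hs
        rw [eu, tl_ofList] at h3
        rw [eu, hd_ofList] at h1
        rw [← h1, isPair_num, not_not] at h2
        exact ⟨u.tail, mem_eval_fix.2 ⟨u, hu, Or.inl ⟨h2, rfl⟩⟩, h3.symm⟩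
      · simp only [List.forall_mem_cons, Check.Holds] at hx
        obtain ⟨h1, h2, h3, -⟩ := hx
        obtain ⟨u, hu, eu⟩ := ih 0 _ _ _ rfl
          (hsub (by simp [subcodes, self_mem_subcodes])) rfl hs
        rw [eu, tl_ofList] at h3
        rw [eu, hd_ofList] at h1
        rw [← h1, isPair_num] at h2
        obtain ⟨w, hw, ew⟩ := ih 1 _ _ _ rfl hc rfl h3.symm
        exact ⟨w, mem_eval_fix.2 ⟨u, hu, Or.inr ⟨h2, hw⟩⟩, ew⟩

open Classical in
/-- Every code is simulated on singleton inputs by some finite system of Horn clauses. -/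
theorem exists_hornSystem (c : Code) :
    ∃ (Q : Type) (_ : Finite Q) (R : List (HornRule Q)) (q : Q),
      ∀ n, (∃ t, Derives R q (num n) t) ↔ (c.eval [n]).Dom := by
  let S := subcodes c
  let ι : Code → Option {d // d ∈ S} := fun d => if h : d ∈ S then some ⟨d, h⟩ else none
  have hι : ∀ {d}, d ∈ S → ∀ {e}, ι e = ι d → e = d := by
    intro d hd e h
    simp only [ι, dif_pos hd] at h
    split_ifs at h with he
    exact congrArg Subtype.val (Option.some.inj h)
  let start : HornRule (Option {d // d ∈ S}) :=
    ⟨none, [.isNil 3, .isPair 2, .hd 2 0, .tl 2 3], ![some (ι c, 2, 1), none]⟩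
  let R := start :: S.flatMap (codeRules ι)
  have hfin : Finite {d // d ∈ S} := S.finite_toSet.to_subtype
  have hne : ∀ {d}, d ∈ S → none ≠ ι d := by
    intro d hd h
    simp [ι, dif_pos hd] at h
  refine ⟨Option {d // d ∈ S}, inferInstance, R, none, fun n => ⟨?_, ?_⟩⟩
  · rintro ⟨t, h⟩
    generalize hs : num n = s at h
    generalize hq : (none : Option {d // d ∈ S}) = q at h
    obtain ⟨r, hr, x, hx, hp⟩ := h
    rcases List.mem_cons.1 hr with rfl | hr
    · simp only [start, List.forall_mem_cons, Check.Holds] at hx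
      obtain ⟨h1, h2, h3, h4, -⟩ := hx
      have h5 : x 2 = ofList [n] := by
        rw [eq_pair h2, h3, h4, eq_nil h1, ← hs]; rfl
      have hR : ∀ d ∈ S, ∀ r ∈ R, r.concl = ι d → r ∈ codeRules ι d := by
        intro d hd r hr he
        rcases List.mem_cons.1 hr with rfl | hr
        · exact absurd he (hne hd)
        · obtain ⟨e, -, hr⟩ := List.mem_flatMap.1 hr
          rw [codeRules_concl hr] at he
          rwa [← hι hd he]
      obtain ⟨w, hw, -⟩ := mem_eval_of_derives (fun d hd => subcodes_subset hd) hR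
        (hp 0 _ _ _ rfl) (self_mem_subcodes c) rfl h5
      exact Part.dom_iff_mem.2 ⟨w, hw⟩
    · obtain ⟨e, he, hr⟩ := List.mem_flatMap.1 hr
      exact absurd (hq.trans (codeRules_concl hr)) (hne he)
  · intro h
    obtain ⟨w, hw⟩ := Part.dom_iff_mem.1 h
    have h₁ : Derives R (ι c) (ofList [n]) (ofList w) := derives_of_mem_eval
      (fun d hd r hr => List.mem_cons_of_mem _ (List.mem_flatMap.2 ⟨d, hd, hr⟩)) hw
    refine ⟨ofList w, Derives.intro start (List.mem_cons_self ..)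
      ![num n, ofList w, ofList [n], nil, nil, nil] ?_ ?_⟩
    · simp [start, Check.Holds, IsPair, ofList]
    · rw [Fin.forall_fin_two]
      constructor <;> rintro q i j ⟨⟩
      exact h₁

/-- Some finite system of Horn clauses has an undecidable derivability problem. -/
theorem exists_undecidable_hornSystem :
    ∃ (Q : Type) (_ : Finite Q) (R : List (HornRule Q)) (q : Q),
      ¬ ComputablePred fun n : ℕ => ∃ t, Derives R q (num n) t := by
  let f : ℕ →. ℕ := fun n => Nat.Partrec.Code.eval (Denumerable.ofNat Nat.Partrec.Code n) 0
  have hf : Partrec f :=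
    Nat.Partrec.Code.eval_part.comp (Computable.ofNat _) (Computable.const 0)
  obtain ⟨c, hc⟩ := Code.exists_code (Nat.Partrec'.part_iff₁.2 hf)
  obtain ⟨Q, hQ, R, q, h⟩ := exists_hornSystem c
  refine ⟨Q, hQ, R, q, fun hcomp => ComputablePred.halting_problem 0 ?_⟩
  refine ComputablePred.computable_of_manyOneReducible
    ⟨Encodable.encode, Computable.encode, fun d => ?_⟩ hcomp
  have := hc ⟨[Encodable.encode d], rfl⟩
  rw [h, this]
  simp [f, List.Vector.head]

end Simulation

/-- The truth-values, up to the flag deciding whether a value is designated: an error value, the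
initial state of the numeral test, the value of theorems, values `data p b b₁ b₂` of tree terms
(being a pair or not, a free bit, the bits of the two components), and values `prf q b c` of
derivations of `q(s, t)` where `s` and `t` have bits `b` and `c`. -/
inductive TV (Q : Type) : Type where
  | err : TV Q
  | ini : TV Q
  | win : TV Q
  | data (p b b₁ b₂ : Bool) : TV Q
  | prf (q : Q) (b c : Bool) : TV Q

namespace TV

variable {Q : Type}

instance [Finite Q] : Finite (TV Q) := by
  let f : TV Q → Option (Option (Option ((Bool × Bool × Bool × Bool) ⊕ (Q × Bool × Bool)))) :=
    fun
    | err => none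
    | ini => some none
    | win => some (some none)
    | data p b b₁ b₂ => some (some (some (.inl (p, b, b₁, b₂))))
    | prf q b c => some (some (some (.inr (q, b, c))))
  refine Finite.of_injective f fun x y h => ?_
  cases x <;> cases y <;> simp_all [f]

def IsData : TV Q → Prop
  | data _ _ _ _ => True
  | _ => False

def IsPrf : TV Q → Prop
  | prf _ _ _ => True
  | _ => False

def isPair : TV Q → Bool
  | data p _ _ _ => p
  | _ => false

def bit : TV Q → Bool
  | data _ b _ _ => b
  | _ => false

def bit₁ : TV Q → Bool
  | data _ _ b _ => b
  | _ => false

def bit₂ : TV Q → Bool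
  | data _ _ _ b => b
  | _ => false

open Classical in
/-- The value of a tree whose subtrees carry the bits `β`. -/
noncomputable def ofTree (β : Tree2 → Bool) (t : Tree2) : TV Q :=
  data (decide t.IsPair) (β t) (β t.hd) (β t.tl)

open Classical in
theorem ofTree_nil (β : Tree2 → Bool) :
    (ofTree β .nil : TV Q) = data false (β .nil) (β .nil) (β .nil) := by
  unfold ofTree
  congr 1
  exact decide_eq_false id

open Classical in
theorem ofTree_pair (β : Tree2 → Bool) (s t : Tree2) :
    (ofTree β (.pair s t) : TV Q) = data true (β (.pair s t)) (β s) (β t) := by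
  unfold ofTree
  congr 1
  exact decide_eq_true trivial

theorem isPair_ofTree (β : Tree2 → Bool) (t : Tree2) :
    (ofTree β t : TV Q).isPair = true ↔ t.IsPair := by
  simp [ofTree, isPair]

open Classical in
/-- The automaton checking that a tuple lists a derivation of `q₀(num n, t)` for some `t`,
followed by `num n, …, num 1, num 0`; tuples are read from right to left. -/
noncomputable def step (q₀ : Q) : TV Q → TV Q → TV Q
  | ini, data false b c d => data false b c d
  | data _ b _ _, data true b' c d => if c = b ∧ d = b then data true b' c d else err
  | data _ b _ _, prf q c _ => if q = q₀ ∧ c = b then win else err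
  | _, _ => err

theorem step_ne_ini (q₀ : Q) (s a : TV Q) : step q₀ s a ≠ ini := by
  unfold step
  split <;> (try split_ifs) <;> simp

theorem isData_step {q₀ : Q} {s a : TV Q} (h : (step q₀ s a).IsData) :
    IsData a ∧ step q₀ s a = a ∧
      ((s = ini ∧ a.isPair = false) ∨
        (IsData s ∧ a.isPair = true ∧ a.bit₁ = s.bit ∧ a.bit₂ = s.bit)) := by
  unfold step at h ⊢
  split at h
  · simp [IsData, isPair]
  · split_ifs at h with h'
    · simp [IsData, isPair, bit, bit₁, bit₂, h']
    · exact absurd h id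
  · split_ifs at h <;> exact absurd h id
  · exact absurd h id

theorem step_eq_win {q₀ : Q} {s a : TV Q} (h : step q₀ s a = win) :
    IsData s ∧ ∃ d, a = prf q₀ s.bit d := by
  unfold step at h
  split at h
  · simp at h
  · split_ifs at h
  · split_ifs at h with h'
    obtain ⟨rfl, rfl⟩ := h'
    exact ⟨trivial, _, rfl⟩
  · simp at h

/-- The state of the automaton `step` after reading the first `k` values of a sequence. -/
noncomputable def chain (q₀ : Q) : ℕ → (ℕ → TV Q) → TV Q
  | 0, _ => ini
  | k + 1, a => step q₀ (chain q₀ k fun i => a (i + 1)) (a 0)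

theorem chain_numerals (q₀ : Q) (β : Tree2 → Bool) (k : ℕ) (a : ℕ → TV Q)
    (h : ∀ i ≤ k, a i = ofTree β (Tree2.num (k - i))) :
    chain q₀ (k + 1) a = ofTree β (Tree2.num k) := by
  induction k generalizing a with
  | zero =>
    rw [chain, chain, h 0 le_rfl]
    simp [Tree2.num, ofTree_nil, step]
  | succ k ih =>
    rw [chain, ih _ fun i hi => by rw [h (i + 1) (by omega)]; congr 2; omega, h 0 (by omega)]
    cases k <;> simp [Tree2.num, ofTree_nil, ofTree_pair, step]

end TV

/-- The extension of a finite tuple by a default value. -/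
def padTuple {V : Type} (d : V) {N : ℕ} (a : Fin N → V) (i : ℕ) : V :=
  if h : i < N then a ⟨i, h⟩ else d

theorem padTuple_of_lt {V : Type} (d : V) {N : ℕ} (a : Fin N → V) {i : ℕ} (h : i < N) :
    padTuple d a i = a ⟨i, h⟩ := dif_pos h

theorem padTuple_of_ne {V : Type} {d : V} {N : ℕ} {a : Fin N → V} {i : ℕ}
    (h : padTuple d a i ≠ d) : i < N := by
  by_contra h'
  exact h (dif_neg h')

theorem padTuple_succ {V : Type} (d : V) {N : ℕ} (a : Fin (N + 1) → V) (i : ℕ) :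
    padTuple d a (i + 1) = padTuple d (fun k => a k.succ) i := by
  unfold padTuple
  by_cases h : i < N
  · rw [dif_pos h, dif_pos (by omega)]; rfl
  · rw [dif_neg h, dif_neg (by omega)]

section Truth

open TV

variable {Q : Type} (R : List (HornRule Q)) (q₀ : Q)

def Check.Accepts (a : ℕ → TV Q) : Check → Prop
  | isNil i => (a i).isPair = false
  | isPair i => (a i).isPair = true
  | hd i j => (a i).bit₁ = (a j).bit
  | tl i j => (a i).bit₂ = (a j).bit

/-- The local correctness test for an inference by the rule `r`, applied to six trees followed by
the derivations of the premises. -/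
def HornRule.Accepts (r : HornRule Q) (a : ℕ → TV Q) : Prop :=
  (∀ i : Fin 6, (a i).IsData) ∧ (∀ c ∈ r.checks, c.Accepts a) ∧
    ∀ (k : Fin 2) q i j, r.prem k = some (q, i, j) → a (6 + k) = prf q (a i).bit (a j).bit

open Classical in
/-- The value of connective number `j`, of arity `N`, on the tuple `a`; the bit `b` is chosen
nondeterministically. The connectives are the numeral test, the two tree constructors, and one
connective for each rule. -/
noncomputable def pick (N j : ℕ) (a : ℕ → TV Q) (b : Bool) : TV Q :=
  match j with
  | 0 => if chain q₀ N a = win then win else err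
  | 1 => data false b b b
  | 2 => if (a 0).IsData ∧ (a 1).IsData then data true b (a 0).bit (a 1).bit else err
  | i + 3 =>
    match R[i]? with
    | none => err
    | some r => if r.Accepts a then prf r.concl (a 0).bit (a 1).bit else err

abbrev arities (n : ℕ) : List ℕ := (n + 2) :: 0 :: 2 :: List.replicate R.length 8

variable {n : ℕ}

/-- The valuations of the Nmatrix, forgetting designation flags. -/
def IsRun (w : Fm (codeSig (arities R n)) → TV Q) : Prop :=
  ∀ j args, ∃ b, w (.app j args) =
    pick R q₀ ((arities R n).get j) j (padTuple err fun i => w (args i)) b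

/-- The run determined by a choice of bits. -/
noncomputable def run (β : Fm (codeSig (arities R n)) → Bool) :
    Fm (codeSig (arities R n)) → TV Q
  | .var _ => err
  | .app j args => pick R q₀ ((arities R n).get j) j (padTuple err fun i => run β (args i))
      (β (.app j args))

theorem isRun_run (β : Fm (codeSig (arities R n)) → Bool) : IsRun R q₀ (run R q₀ β) :=
  fun j args => ⟨β (.app j args), by rw [run]⟩

/-- The formula representing a tree. -/
def treeFm : Tree2 → Fm (codeSig (arities R n))
  | .nil => .app ⟨1, by simp⟩ fun _ => .var 0
  | .pair s t => .app ⟨2, by simp⟩ fun i => if i.val = 0 then treeFm s else treeFm t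

variable {R q₀}

theorem treeFm_injective : Function.Injective (treeFm R (n := n)) := by
  intro s
  induction s with
  | nil =>
    intro t h
    cases t with
    | nil => rfl
    | pair => simp [treeFm] at h
  | pair s₁ s₂ h₁ h₂ =>
    intro t h
    cases t with
    | nil => simp [treeFm] at h
    | pair t₁ t₂ =>
      rw [treeFm, treeFm] at h
      injection h with _ h
      have e₁ := congrFun h ⟨0, by simp⟩
      have e₂ := congrFun h ⟨1, by simp⟩
      simp only [if_pos, one_ne_zero, if_false] at e₁ e₂
      rw [h₁ e₁, h₂ e₂]

theorem eq_of_forall_bit {s t : Tree2}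
    (h : ∀ β : Fm (codeSig (arities R n)) → Bool, β (treeFm R s) = β (treeFm R t)) : s = t := by
  classical
  have := h fun x => decide (x = treeFm R t)
  simp only [decide_true, decide_eq_true_eq] at this
  exact treeFm_injective this

theorem IsRun.treeFm {w : Fm (codeSig (arities R n)) → TV Q} (hw : IsRun R q₀ w) (t : Tree2) :
    w (treeFm R t) = ofTree (fun s => (w (treeFm R s)).bit) t := by
  induction t with
  | nil =>
    obtain ⟨b, hb⟩ := hw ⟨1, by simp⟩ fun _ => .var 0
    change w (_root_.treeFm R .nil) = data false b b b at hb
    simp [ofTree_nil, hb, bit]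
  | pair s t hs ht =>
    obtain ⟨b, hb⟩ := hw ⟨2, by simp⟩ fun i =>
      if i.val = 0 then _root_.treeFm R s else _root_.treeFm R t
    change w (_root_.treeFm R (.pair s t)) = _ at hb
    rw [pick, padTuple_of_lt (i := 0) _ _ (by simp), padTuple_of_lt (i := 1) _ _ (by simp)] at hb
    simp only [if_true, one_ne_zero, if_false] at hb
    rw [if_pos ⟨by change (w (_root_.treeFm R s)).IsData; rw [hs]; trivial,
      by change (w (_root_.treeFm R t)).IsData; rw [ht]; trivial⟩] at hb
    simp [ofTree_pair, hb, bit]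

theorem run_treeFm (β : Fm (codeSig (arities R n)) → Bool) (t : Tree2) :
    run R q₀ β (treeFm R t) = ofTree (fun s => β (treeFm R s)) t := by
  rw [(isRun_run R q₀ β).treeFm]
  congr 1
  funext s
  cases s with
  | nil => rfl
  | pair s t =>
    have h := (isRun_run R q₀ β).treeFm (.pair s t)
    rw [treeFm, run, pick] at h
    split_ifs at h with h'
    · rw [treeFm, run, pick, if_pos h', bit]
    · simp [ofTree] at h

theorem Check.accepts_of_holds {β : Tree2 → Bool} {x : Fin 6 → Tree2} {a : ℕ → TV Q}
    (ha : ∀ i : Fin 6, a i = ofTree β (x i)) (c : Check) (hc : c.Holds x) : c.Accepts a := by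
  cases c <;> simp_all [Check.Accepts, Check.Holds, ofTree, TV.isPair, bit, bit₁, bit₂]

theorem exists_isPrf_of_derives {q : Q} {s t : Tree2} (h : Derives R q s t) :
    ∃ A : Fm (codeSig (arities R n)), ∀ w, IsRun R q₀ w →
      w A = prf q (w (treeFm R s)).bit (w (treeFm R t)).bit := by
  induction h with
  | intro r hr x hx _ ih =>
    obtain ⟨i, hi, rfl⟩ := List.getElem_of_mem hr
    have hex : ∀ k : Fin 2, ∃ P : Fm (codeSig (arities R n)), ∀ q i' j,
        R[i].prem k = some (q, i', j) → ∀ w, IsRun R q₀ w →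
          w P = prf q (w (treeFm R (x i'))).bit (w (treeFm R (x j))).bit := by
      intro k
      rcases hk : R[i].prem k with _ | ⟨q, i', j⟩
      · exact ⟨.var 0, by simp⟩
      · obtain ⟨P, hP⟩ := ih k q i' j hk
        exact ⟨P, by rintro _ _ _ ⟨⟩; exact hP⟩
    choose P hP using hex
    let F : ℕ → Fm (codeSig (arities R n)) := fun m =>
      if h : m < 6 then treeFm R (x ⟨m, h⟩) else if m = 6 then P 0 else P 1
    refine ⟨.app ⟨i + 3, by simpa using hi⟩ fun k => F k, fun w hw => ?_⟩
    obtain ⟨b, hb⟩ := hw ⟨i + 3, by simpa using hi⟩ fun k => F k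
    rw [hb]
    have hN : (arities R n).get ⟨i + 3, by simpa using hi⟩ = 8 := by simp
    set a := padTuple (err : TV Q)
      fun k : Fin ((arities R n).get ⟨i + 3, by simpa using hi⟩) => w (F k) with ha
    have ha' : ∀ m < 8, a m = w (F m) := fun m hm => padTuple_of_lt _ _ (by rwa [hN])
    have hdata : ∀ k : Fin 6, a k = w (treeFm R (x k)) := by
      intro k
      rw [ha' _ (by omega)]
      simp [F]
    have hacc : R[i].Accepts a := by
      refine ⟨fun k => ?_, fun c hc => ?_, fun k q i' j hk => ?_⟩
      · rw [hdata, hw.treeFm]; trivial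
      · exact c.accepts_of_holds (fun k => (hdata k).trans (hw.treeFm _)) (hx c hc)
      · rw [hdata, hdata, ← hP k q i' j hk w hw, ha' _ (by omega)]
        fin_cases k <;> simp [F]
    change pick R q₀ _ (i + 3) a b = _
    rw [pick, List.getElem?_eq_getElem hi]
    simp only [if_pos hacc]
    rw [← hdata 0, ← hdata 1]
    rfl

theorem exists_theorem_of_derives {t : Tree2} (h : Derives R q₀ (.num n) t) :
    ∃ A : Fm (codeSig (arities R n)), ∀ w, IsRun R q₀ w → w A = win := by
  obtain ⟨P, hP⟩ := exists_isPrf_of_derives (n := n) (q₀ := q₀) h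
  let F : ℕ → Fm (codeSig (arities R n)) := fun m =>
    if m = 0 then P else treeFm R (.num (n - (m - 1)))
  refine ⟨.app ⟨0, by simp⟩ fun k => F k, fun w hw => ?_⟩
  obtain ⟨b, hb⟩ := hw ⟨0, by simp⟩ fun k => F k
  rw [hb]
  set a := padTuple (err : TV Q)
    fun k : Fin ((arities R n).get ⟨0, by simp⟩) => w (F k) with ha
  have ha' : ∀ m < n + 2, a m = w (F m) := fun m hm => padTuple_of_lt _ _ hm
  change pick R q₀ (n + 2) 0 a b = _
  rw [pick, if_pos]
  rw [chain, chain_numerals q₀ (fun s => (w (treeFm R s)).bit), ha' 0 (by omega)]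
  · simp only [F, if_pos]
    rw [hP w hw]
    simp [ofTree, step]
  · intro i hi
    rw [ha' _ (by omega), ← hw.treeFm]
    simp [F]

theorem eq_treeFm_of_isData {β : Fm (codeSig (arities R n)) → Bool}
    {A : Fm (codeSig (arities R n))} (h : (run R q₀ β A).IsData) : ∃ t, A = treeFm R t := by
  induction A with
  | var => exact absurd h id
  | app j args ih =>
    obtain ⟨j, hj⟩ := j
    rw [run] at h
    rcases j with _ | _ | _ | i
    · simp only [pick] at h
      split_ifs at h <;> exact absurd h id
    · refine ⟨.nil, ?_⟩
      rw [treeFm]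
      congr 1
      funext i
      exact i.elim0
    · simp only [pick] at h
      split_ifs at h with h'
      · rw [padTuple_of_lt (i := 0) _ _ (by simp), padTuple_of_lt (i := 1) _ _ (by simp)] at h'
        obtain ⟨s, hs⟩ := ih _ h'.1
        obtain ⟨t, ht⟩ := ih _ h'.2
        refine ⟨.pair s t, ?_⟩
        rw [treeFm]
        congr 1
        funext i
        obtain ⟨i, hi⟩ := i
        have hi' : i < 2 := hi
        rcases i with _ | _ | i
        · exact hs
        · exact ht
        · omega
      · exact absurd h id
    · simp only [pick] at h
      split at h
      · exact absurd h id
      · split_ifs at h <;> exact absurd h id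

theorem padTuple_isData {N : ℕ} (args : Fin N → Fm (codeSig (arities R n))) (i : ℕ)
    (h : ∀ β, (padTuple err (fun k => run R q₀ β (args k)) i).IsData) :
    ∃ t, ∀ β, padTuple err (fun k => run R q₀ β (args k)) i =
      ofTree (fun s => β (treeFm R s)) t := by
  have hi : i < N := padTuple_of_ne (d := err) (a := fun k => run R q₀ (fun _ => true) (args k))
    fun e => by have := h fun _ => true; rw [e] at this; exact this
  simp only [padTuple_of_lt _ _ hi] at h ⊢
  obtain ⟨t, ht⟩ := eq_treeFm_of_isData (h fun _ => true)
  exact ⟨t, fun β => by rw [ht, run_treeFm]⟩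

theorem derives_of_isPrf (A : Fm (codeSig (arities R n)))
    (h : ∀ β, (run R q₀ β A).IsPrf) :
    ∃ q s t, Derives R q s t ∧
      ∀ β, run R q₀ β A = prf q (β (treeFm R s)) (β (treeFm R t)) := by
  induction A with
  | var => exact absurd (h fun _ => true) id
  | app j args ih =>
    obtain ⟨j, hj⟩ := j
    simp only [run] at h ⊢
    rcases j with _ | _ | _ | i
    · have h := h fun _ => true
      simp only [pick] at h
      split_ifs at h <;> exact absurd h id
    · exact absurd (h fun _ => true) id
    · have h := h fun _ => true
      simp only [pick] at h
      split_ifs at h <;> exact absurd h id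
    · rcases hr : R[i]? with _ | r
      · have h := h fun _ => true
        simp only [pick, hr] at h
        exact absurd h id
      · simp only [pick, hr] at h ⊢
        have hacc : ∀ β, r.Accepts (padTuple err fun k => run R q₀ β (args k)) := by
          intro β
          by_contra h'
          have h := h β
          rw [if_neg h'] at h
          exact h
        have hex := fun k : Fin 6 =>
          padTuple_isData (q₀ := q₀) args k fun β => (hacc β).1 k
        choose x hx using hex
        refine ⟨r.concl, x 0, x 1, Derives.intro r (List.mem_of_getElem? hr) x ?_ ?_, ?_⟩
        · intro c hc
          have hc := fun β => (hacc β).2.1 c hc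
          cases c with
          | isNil i =>
            have := hc fun _ => true
            simp only [Check.Accepts, hx] at this
            rw [Check.Holds, ← isPair_ofTree (Q := Q), this]
            exact Bool.false_ne_true
          | isPair i =>
            have := hc fun _ => true
            simp only [Check.Accepts, hx] at this
            exact (isPair_ofTree _ _).1 this
          | hd i j =>
            simp only [Check.Accepts, hx] at hc
            exact eq_of_forall_bit hc
          | tl i j =>
            simp only [Check.Accepts, hx] at hc
            exact eq_of_forall_bit hc
        · intro k q i' j hk
          have hc := fun β => (hacc β).2.2 k q i' j hk
          simp only [hx] at hc
          have hlt : 6 + (k : ℕ) < (arities R n).get ⟨i + 3, hj⟩ :=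
            padTuple_of_ne (d := err) (a := fun k => run R q₀ (fun _ => true) (args k))
              (by rw [hc]; simp)
          simp only [padTuple_of_lt _ _ hlt] at hc
          obtain ⟨q', s, t, hd, he⟩ := ih ⟨_, hlt⟩ fun β => by rw [hc]; trivial
          have he' := fun β => (he β).symm.trans (hc β)
          simp only [prf.injEq] at he'
          obtain rfl := (he' fun _ => true).1
          obtain rfl := eq_of_forall_bit fun β => (he' β).2.1
          obtain rfl := eq_of_forall_bit fun β => (he' β).2.2
          exact hd
        · intro β
          rw [if_pos (hacc β)]
          have h0 := hx 0 β
          have h1 := hx 1 β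
          simp only [Fin.val_zero, Fin.val_one] at h0 h1
          rw [h0, h1]
          rfl

theorem chain_isData {a : (Fm (codeSig (arities R n)) → Bool) → ℕ → TV Q}
    (ha : ∀ i, (∀ β, (a β i).IsData) →
      ∃ t, ∀ β, a β i = ofTree (fun s => β (treeFm R s)) t)
    (k : ℕ) (h : ∀ β, (chain q₀ (k + 1) (a β)).IsData) (β : Fm (codeSig (arities R n)) → Bool) :
    chain q₀ (k + 1) (a β) = ofTree (fun s => β (treeFm R s)) (.num k) := by
  induction k generalizing a β with
  | zero =>
    obtain ⟨t, ht⟩ := ha 0 fun β => (isData_step (h β)).1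
    obtain ⟨-, h₂, h₃⟩ := isData_step (h β)
    rcases h₃ with ⟨-, h₃⟩ | ⟨h₃, -⟩
    · rw [chain, h₂, ht]
      rw [ht] at h₃
      rw [Tree2.eq_nil (t := t) (by simpa [ofTree, TV.isPair] using h₃)]
      rfl
    · exact absurd h₃ id
  | succ k ih =>
    obtain ⟨t, ht⟩ := ha 0 fun β => (isData_step (h β)).1
    have key : ∀ β, (chain q₀ (k + 1) fun i => a β (i + 1)).IsData ∧ (a β 0).isPair = true ∧
        (a β 0).bit₁ = (chain q₀ (k + 1) fun i => a β (i + 1)).bit ∧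
        (a β 0).bit₂ = (chain q₀ (k + 1) fun i => a β (i + 1)).bit := by
      intro β
      rcases (isData_step (h β)).2.2 with ⟨h₃, -⟩ | h₃
      · exact absurd h₃ (step_ne_ini _ _ _)
      · exact h₃
    have ih' := ih (a := fun β i => a β (i + 1)) (fun i => ha (i + 1)) fun β => (key β).1
    simp only [ih', ht] at key
    rw [chain, (isData_step (h β)).2.1, ht]
    congr 1
    refine Tree2.eq_num_succ (by simpa [ofTree, TV.isPair] using (key β).2.1) ?_ ?_
    · exact eq_of_forall_bit fun β => (key β).2.2.1
    · exact eq_of_forall_bit fun β => (key β).2.2.2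

theorem derives_of_run_eq_win {A : Fm (codeSig (arities R n))} (h : ∀ β, run R q₀ β A = win) :
    ∃ t, Derives R q₀ (.num n) t := by
  cases A with
  | var => simp [run] at h
  | app j args =>
    obtain ⟨j, hj⟩ := j
    simp only [run] at h
    rcases j with _ | _ | _ | i
    · have hwin : ∀ β, chain q₀ (n + 2) (padTuple err fun k => run R q₀ β (args k)) = win := by
        intro β
        by_contra h'
        have h : pick R q₀ (n + 2) 0 (padTuple err fun k => run R q₀ β (args k))
          (β (.app ⟨0, hj⟩ args)) = win := h β
        rw [pick, if_neg h'] at h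
        simp at h
      have hstep := fun β => step_eq_win (hwin β)
      have hnum := chain_isData
        (a := fun β i => padTuple err (fun k => run R q₀ β (args k)) (i + 1))
        (fun i => padTuple_isData args (i + 1)) n fun β => (hstep β).1
      simp only [hnum] at hstep
      have hlt : 0 < (arities R n).get ⟨0, hj⟩ := by simp
      simp only [padTuple_of_lt _ _ hlt] at hstep
      obtain ⟨q, s, t, hd, he⟩ := derives_of_isPrf (q₀ := q₀) (args ⟨0, hlt⟩) fun β => by
        obtain ⟨d, hd⟩ := (hstep β).2
        rw [hd]; trivial
      have he' : ∀ β : Fm (codeSig (arities R n)) → Bool,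
          q = q₀ ∧ β (treeFm R s) = β (treeFm R (.num n)) := by
        intro β
        obtain ⟨d, hd⟩ := (hstep β).2
        rw [he] at hd
        injection hd with h₁ h₂
        exact ⟨h₁, h₂⟩
      obtain rfl := (he' fun _ => true).1
      obtain rfl := eq_of_forall_bit fun β => (he' β).2
      exact ⟨t, hd⟩
    · simp [pick] at h
    · have h := h fun _ => true
      simp only [pick] at h
      split_ifs at h
    · have h := h fun _ => true
      simp only [pick] at h
      split at h
      · simp at h
      · split_ifs at h

end Truth

section Encoding

open TV

variable {Q : Type} (R : List (HornRule Q)) (q₀ : Q) {m : ℕ} (e : TV Q × Bool ≃ Fin (m + 1))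

theorem getElem?_flatMap_of_length {α β : Type} {L : ℕ} {f : α → List β}
    (hf : ∀ a, (f a).length = L) (l : List α) (i : ℕ) {x : ℕ} (hx : x < L) :
    (l.flatMap f)[x + L * i]? = l[i]?.bind fun a => (f a)[x]? := by
  induction l generalizing i with
  | nil => simp
  | cons a l ih =>
    rw [List.flatMap_cons]
    cases i with
    | zero => simp [List.getElem?_append_left, hf, hx]
    | succ i =>
      rw [List.getElem?_append_right (by rw [hf]; nlinarith), hf,
        show x + L * (i + 1) - L = x + L * i by rw [Nat.mul_succ]; omega, ih]
      simp

/-- The table entry listing both flagged copies of the values `f false` and `f true`. -/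
def cells (f : Bool → TV Q) : List ℕ :=
  [e (f false, false), e (f false, true), e (f true, false), e (f true, true)].map Fin.val

theorem mem_cells {f : Bool → TV Q} {y : Fin (m + 1)} :
    (y : ℕ) ∈ cells e f ↔ ∃ b c, y = e (f b, c) := by
  simp [cells, Fin.val_inj, or_assoc]

/-- The truth-values of the arguments, extended to a sequence. -/
def argSeq {N : ℕ} (args : Fin N → Fin (m + 1)) : ℕ → TV Q :=
  padTuple err fun i => (e.symm (args i)).1

/-- The table of connective number `j` when it has arity `N`. -/
noncomputable def row (N j : ℕ) : List (List ℕ) :=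
  List.ofFn fun k : Fin ((m + 1) ^ N) =>
    cells e (pick R q₀ N j (argSeq e (finFunctionFinEquiv.symm k)))

theorem getD_row (N j : ℕ) (args : Fin N → Fin (m + 1)) :
    (row R q₀ e N j).getD (∑ i, (args i : ℕ) * (m + 1) ^ (i : ℕ)) [] =
      cells e (pick R q₀ N j (argSeq e args)) := by
  rw [← finFunctionFinEquiv_apply, row, List.getD_eq_getElem _ _
    (by rw [List.length_ofFn]; exact (finFunctionFinEquiv args).isLt), List.getElem_ofFn]
  simp only [Fin.eta, Equiv.symm_apply_apply]

/-- The final states of the automaton `step` on all tuples of length `k`. -/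
noncomputable def states : ℕ → List (Fin (m + 1))
  | 0 => [e (ini, false)]
  | k + 1 => (states k).flatMap fun s =>
      List.ofFn fun x => e (step q₀ (e.symm s).1 (e.symm x).1, false)

theorem getElem?_states (k : ℕ) (args : Fin k → Fin (m + 1)) :
    (states q₀ e k)[∑ i, (args i : ℕ) * (m + 1) ^ (i : ℕ)]? =
      some (e (chain q₀ k (argSeq e args), false)) := by
  induction k with
  | zero => simp [states, chain]
  | succ k ih =>
    have hsum : ∑ i, (args i : ℕ) * (m + 1) ^ (i : ℕ) =
        args 0 + (m + 1) * ∑ i : Fin k, (args i.succ : ℕ) * (m + 1) ^ (i : ℕ) := by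
      rw [Fin.sum_univ_succ, Finset.mul_sum]
      simp [pow_succ, mul_left_comm, mul_comm]
    have htail : (fun i => argSeq e args (i + 1)) = argSeq e fun i => args i.succ :=
      funext fun i => padTuple_succ _ _ _
    have hhead : argSeq e args 0 = (e.symm (args 0)).1 := padTuple_of_lt _ _ _
    rw [hsum, states, getElem?_flatMap_of_length (fun _ => List.length_ofFn) _ _ (args 0).isLt,
      ih, chain, htail, hhead]
    simp only [Option.bind_some, List.getElem?_ofFn, Equiv.symm_apply_apply]
    rw [dif_pos (args 0).isLt]

open Classical in
/-- The table of the numeral test of arity `N`. -/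
noncomputable def testRow (N : ℕ) : List (List ℕ) :=
  (states q₀ e N).map fun s => cells e fun _ => if (e.symm s).1 = win then win else err

theorem getD_testRow (N : ℕ) (args : Fin N → Fin (m + 1)) :
    (testRow q₀ e N).getD (∑ i, (args i : ℕ) * (m + 1) ^ (i : ℕ)) [] =
      cells e (pick R q₀ N 0 (argSeq e args)) := by
  rw [testRow, List.getD_eq_getElem?_getD, List.getElem?_map, getElem?_states,
    Option.map_some, Option.getD_some]
  refine congrArg (cells e) (funext fun _ => ?_)
  rw [Equiv.symm_apply_apply]
  rfl

noncomputable def table (n : ℕ) : List (List (List ℕ)) :=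
  testRow q₀ e (n + 2) :: row R q₀ e 0 1 :: row R q₀ e 2 2 ::
    (List.range R.length).map fun i => row R q₀ e 8 (i + 3)

theorem getD_table {n : ℕ} (j : Fin (arities R n).length)
    (args : Fin ((arities R n).get j) → Fin (m + 1)) :
    ((table R q₀ e n).getD j []).getD (∑ i, (args i : ℕ) * (m + 1) ^ (i : ℕ)) [] =
      cells e (pick R q₀ ((arities R n).get j) j (argSeq e args)) := by
  obtain ⟨j, hj⟩ := j
  rcases j with _ | _ | _ | i
  · exact getD_testRow R q₀ e (n + 2) args
  · exact getD_row R q₀ e 0 1 args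
  · exact getD_row R q₀ e 2 2 args
  · have hi : i < R.length := by simpa using hj
    have h : (table R q₀ e n).getD (i + 3) [] =
        row R q₀ e ((arities R n).get ⟨i + 3, hj⟩) (i + 3) := by
      simp [table, hi]
    rw [h, getD_row]

theorem mem_interp {n : ℕ} {ds : List ℕ} {j : Fin (arities R n).length}
    {args : Fin ((arities R n).get j) → Fin (m + 1)} {y : Fin (m + 1)} :
    y ∈ (decodeNMat (arities R n) m (table R q₀ e n) ds).interp j args ↔
      ∃ b c, y = e (pick R q₀ ((arities R n).get j) j (argSeq e args) b, c) := by
  have h := getD_table R q₀ e j args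
  simp only [decodeNMat]
  rw [h, if_pos ⟨e (pick R q₀ ((arities R n).get j) j (argSeq e args) false, false),
    (mem_cells e).2 ⟨_, _, rfl⟩⟩]
  exact mem_cells e

variable {R q₀ e} in
theorem IsVal.isRun {n : ℕ} {ds : List ℕ} {v : Fm (codeSig (arities R n)) → Fin (m + 1)}
    (hv : IsVal (decodeNMat (arities R n) m (table R q₀ e n) ds) v) :
    IsRun R q₀ fun A => (e.symm (v A)).1 := by
  intro j args
  obtain ⟨b, c, h⟩ := (mem_interp R q₀ e).1 (hv j args)
  refine ⟨b, ?_⟩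
  dsimp only
  rw [h, Equiv.symm_apply_apply]
  rfl

theorem isVal_run {n : ℕ} (ds : List ℕ) (β φ : Fm (codeSig (arities R n)) → Bool) :
    IsVal (decodeNMat (arities R n) m (table R q₀ e n) ds) fun A => e (run R q₀ β A, φ A) := by
  intro j args
  refine (mem_interp R q₀ e).2 ⟨β (.app j args), φ (.app j args), ?_⟩
  dsimp only
  rw [run]
  simp only [argSeq, Equiv.symm_apply_apply]

open Classical in
/-- The list of codes of the values satisfying `P`. -/
noncomputable def codesOf (P : TV Q × Bool → Prop) : List ℕ :=
  ((List.finRange (m + 1)).filter fun x => P (e.symm x)).map Fin.val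

theorem mem_codesOf {P : TV Q × Bool → Prop} {x : Fin (m + 1)} :
    (x : ℕ) ∈ codesOf e P ↔ P (e.symm x) := by
  simp [codesOf, Fin.val_inj]

/-- The two Nmatrices with the same table: in both the flagged values are designated, in the
first one so is the value of theorems. -/
noncomputable def pairCode (n : ℕ) : EqvCode :=
  (arities R n, (m, table R q₀ e n, codesOf e fun x => x.2 = true ∨ x.1 = win),
    (m, table R q₀ e n, codesOf e fun x => x.2 = true))

theorem not_eqvProblem_pairCode (n : ℕ) :
    ¬ eqvProblem (pairCode R q₀ e n) ↔ ∃ t, Derives R q₀ (.num n) t := by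
  classical
  have hD : ∀ (P : TV Q × Bool → Prop) (x : Fin (m + 1)),
      x ∈ (decodeNMat (arities R n) m (table R q₀ e n) (codesOf e P)).D ↔ P (e.symm x) :=
    fun P x => mem_codesOf e
  have h₂ : ∀ (Γ : Set (Fm (codeSig (arities R n)))) A,
      Entails (decodeNMat (arities R n) m (table R q₀ e n) (codesOf e fun x => x.2 = true)) Γ A →
        A ∈ Γ := by
    intro Γ A h
    have := h _ (isVal_run R q₀ e _ (fun _ => true) fun B => decide (B ∈ Γ))
      fun B hB => by rw [hD]; simpa using hB
    rw [hD] at this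
    simpa using this
  constructor
  · intro h
    by_contra hn
    refine h fun (Γ : Set (Fm (codeSig (arities R n)))) (A : Fm (codeSig (arities R n))) =>
      ⟨fun h₁ => ?_, fun h v _ hΓ => hΓ A (h₂ Γ A h)⟩
    suffices A ∈ Γ from fun v _ hΓ => hΓ A this
    by_contra hA
    refine hn (derives_of_run_eq_win (A := A) fun β => ?_)
    have := h₁ _ (isVal_run R q₀ e _ β fun B => decide (B ≠ A)) fun B hB =>
      (hD (fun x => x.2 = true ∨ x.1 = win) _).2 (Or.inl (by
        rw [Equiv.symm_apply_apply]
        exact decide_eq_true fun hBA => hA (hBA ▸ hB)))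
    simpa using (hD (fun x => x.2 = true ∨ x.1 = win) _).1 this
  · rintro ⟨t, ht⟩ h
    obtain ⟨A, hA⟩ := exists_theorem_of_derives ht
    refine h₂ ∅ A ((h ∅ A).1 fun v hv _ => ?_)
    exact (hD (fun x => x.2 = true ∨ x.1 = win) _).2 (Or.inr (hA _ (IsVal.isRun hv)))

theorem computable_pairCode : Computable (pairCode R q₀ e) := by
  classical
  have hstates : Primrec (states q₀ e) := by
    have : Primrec fun s : Fin (m + 1) =>
        List.ofFn fun x => e (step q₀ (e.symm s).1 (e.symm x).1, false) := Primrec.dom_finite _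
    refine (Primrec.nat_rec₁ [e (ini, false)] ((Primrec.list_flatMap Primrec.snd
      (this.comp Primrec.snd).to₂).to₂)).of_eq fun k => ?_
    induction k with
    | zero => rfl
    | succ k ih => rw [states, ← ih]
  have htest : Primrec fun n => testRow q₀ e (n + 2) :=
    Primrec.list_map (hstates.comp (Primrec.succ.comp Primrec.succ))
      ((Primrec.dom_finite fun s : Fin (m + 1) =>
        cells e fun _ => if (e.symm s).1 = win then win else err).comp Primrec.snd).to₂
  have htable : Primrec (table R q₀ e) := Primrec.list_cons.comp htest (Primrec.const _)
  have harities : Primrec (arities R) :=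
    Primrec.list_cons.comp (Primrec.succ.comp Primrec.succ) (Primrec.const _)
  exact (harities.pair (((Primrec.const m).pair (htable.pair (Primrec.const _))).pair
    ((Primrec.const m).pair (htable.pair (Primrec.const _))))).to_comp

end Encoding

theorem not_computablePred_eqvProblem : ¬ ComputablePred eqvProblem := by
  intro h
  obtain ⟨Q, _, R, q, hR⟩ := exists_undecidable_hornSystem
  obtain ⟨k, ⟨e⟩⟩ := Finite.exists_equiv_fin (TV Q × Bool)
  cases k with
  | zero => exact (e (.err, false)).elim0
  | succ m =>
    refine hR (ComputablePred.computable_of_manyOneReducible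
      ⟨pairCode R q e, computable_pairCode R q e, fun n => ?_⟩ h.not)
    exact (not_eqvProblem_pairCode R q e n).symm

/-- If the equivalence problem for finite Nmatrices were decidable, then the
theorem existence problem for finite Nmatrices would be decidable; consequently (since the
latter is undecidable), the equivalence problem for finite Nmatrices is undecidable. -/
theorem stmt_13 :
    (ComputablePred eqvProblem → ComputablePred thmExistsProblem) ∧
    ¬ ComputablePred eqvProblem :=
  ⟨fun h => absurd h not_computablePred_eqvProblem, not_computablePred_eqvProblem⟩
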